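/- Suppose Assumption A1 holds, the influence network is a star topology with center node 1 (C_{j1} = 1 and C_{ji} = 0 for all j ≠ 1 and all i ≠ 1), and the center node is fully stubborn (a_1 = 0). Let α = (1/4)∑_{j ∈ V_p} a_j/(1 − a_j) − (n − 1)/n. Then the box Γ_n(0, 𝟙_n + α e_1) is positively invariant under the perception dynamics with reflected appraisals (system (11)). -/

import Mathlib

/-!
Since `1 - diagonal a` is diagonal with nonzero entries, coordinate `i` of the map is
`(1 - a i) * ∑ j, W(p) j i * (a j / (1 - a j) * p j) + (1 - a i) / n` (`percMap_apply`).
In a star with `a 0 = 0` the term `j = 0` vanishes, and the remaining sum is explicit: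

* at a leaf `i` only `j = i` contributes, giving `a i * p i ^ 2 + (1 - a i) / n`
  (`percMap_leaf`), a convex combination of `p i ^ 2` and `1 / n`, hence in `[0, 1]`;
* at the center it is `∑ j ≠ 0, a j / (1 - a j) * ((1 - p j) * p j) + 1 / n`
  (`percMap_center`), and `0 ≤ (1 - t) * t ≤ 1 / 4` on `[0, 1]` gives the bounds `0` and `1 + α`.
-/

open Matrix Finset

/-- `W(x) = diag(x) + (I - diag(x)) C`. -/
noncomputable def Wmat (n : ℕ) (C : Matrix (Fin n) (Fin n) ℝ) (x : Fin n → ℝ) :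
    Matrix (Fin n) (Fin n) ℝ :=
  Matrix.diagonal x + (1 - Matrix.diagonal x) * C

/-- The map of system (11): `p ↦ (I - A) W(p)ᵀ A (I - A)⁻¹ p + (I - A) 𝟙 / n`. -/
noncomputable def percMap (n : ℕ) (C : Matrix (Fin n) (Fin n) ℝ) (a : Fin n → ℝ)
    (p : Fin n → ℝ) : Fin n → ℝ :=
  ((1 - Matrix.diagonal a) * (Wmat n C p)ᵀ * Matrix.diagonal a *
      (1 - Matrix.diagonal a)⁻¹) *ᵥ p
    + (1 / (n : ℝ)) • ((1 - Matrix.diagonal a) *ᵥ (fun _ => (1 : ℝ)))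

/-- The `n`-simplex `Δ_n`. -/
def simplex (n : ℕ) : Set (Fin n → ℝ) := {x | (∀ i, 0 ≤ x i) ∧ ∑ i, x i = 1}

/-- The box `Γ_n(y, z) = {x : y ≤ x ≤ z}`. -/
def box (n : ℕ) (y z : Fin n → ℝ) : Set (Fin n → ℝ) := {x | ∀ i, y i ≤ x i ∧ x i ≤ z i}

theorem percMap_apply {n : ℕ} (C : Matrix (Fin n) (Fin n) ℝ) {a : Fin n → ℝ}
    (ha1 : ∀ i, a i < 1) (p : Fin n → ℝ) (i : Fin n) :
    percMap n C a p i =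
      (1 - a i) * ∑ j, Wmat n C p j i * (a j / (1 - a j) * p j) + (1 - a i) / n := by
  have hD : (1 - Matrix.diagonal a : Matrix (Fin n) (Fin n) ℝ)
      = Matrix.diagonal (fun i => 1 - a i) := by
    rw [← Matrix.diagonal_one, Matrix.diagonal_sub]
  have hinv : (Matrix.diagonal (fun i => 1 - a i))⁻¹
      = Matrix.diagonal (fun i => (1 - a i)⁻¹) := by
    apply Matrix.inv_eq_right_inv
    rw [Matrix.diagonal_mul_diagonal, ← Matrix.diagonal_one]
    congr 1
    funext i
    exact mul_inv_cancel₀ (sub_pos.2 (ha1 i)).ne'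
  simp only [percMap, hD, hinv, Pi.add_apply, Pi.smul_apply, smul_eq_mul, Matrix.mulVec_diagonal]
  congr 1
  · simp only [Matrix.mulVec, dotProduct, Matrix.mul_diagonal, Matrix.diagonal_mul,
      Matrix.transpose_apply, Finset.mul_sum]
    refine Finset.sum_congr rfl fun j _ => ?_
    rw [div_eq_mul_inv]
    ring
  · ring

theorem Wmat_apply {n : ℕ} (C : Matrix (Fin n) (Fin n) ℝ) (x : Fin n → ℝ) (j i : Fin n) :
    Wmat n C x j i = (if j = i then x j else 0) + (1 - x j) * C j i := by
  simp [Wmat, Matrix.diagonal_apply, sub_mul]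

theorem percMap_leaf {n : ℕ} [NeZero n] (C : Matrix (Fin n) (Fin n) ℝ) {a : Fin n → ℝ}
    (ha1 : ∀ i, a i < 1) (hcenter : a 0 = 0)
    (hstar2 : ∀ j : Fin n, j ≠ 0 → ∀ i : Fin n, i ≠ 0 → C j i = 0)
    (p : Fin n → ℝ) {i : Fin n} (hi : i ≠ 0) :
    percMap n C a p i = a i * p i ^ 2 + (1 - a i) / n := by
  have h1 : (1 - a i) ≠ 0 := (sub_pos.2 (ha1 i)).ne'
  rw [percMap_apply C ha1, Finset.sum_eq_single i]
  · rw [Wmat_apply, hstar2 i hi i hi, if_pos rfl]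
    field_simp
    ring
  · intro j _ hji
    by_cases hj : j = 0
    · simp [hj, hcenter]
    · simp [Wmat_apply, hstar2 j hj i hi, hji]
  · simp

theorem percMap_center {n : ℕ} [NeZero n] (C : Matrix (Fin n) (Fin n) ℝ) {a : Fin n → ℝ}
    (ha0 : ∀ i, 0 ≤ a i) (ha1 : ∀ i, a i < 1) (hcenter : a 0 = 0)
    (hstar1 : ∀ j : Fin n, j ≠ 0 → C j 0 = 1) (p : Fin n → ℝ) :
    percMap n C a p 0 =
      ∑ j ∈ Finset.univ.filter (fun j => 0 < a j), a j / (1 - a j) * ((1 - p j) * p j)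
        + 1 / n := by
  rw [percMap_apply C ha1, hcenter, sub_zero, one_mul, Finset.sum_filter]
  congr 1
  refine Finset.sum_congr rfl fun j _ => ?_
  split_ifs with h
  · have hj : j ≠ 0 := by
      rintro rfl
      exact h.ne' hcenter
    rw [Wmat_apply, hstar1 j hj, if_neg hj]
    ring
  · simp [le_antisymm (not_lt.1 h) (ha0 j)]

/-- Theorem 3(i): star topology with fully stubborn center node `0`;
the box `Γ_n(0, 𝟙 + α e₁)` is positively invariant under system (11). -/
theorem star_fully_stubborn_center_invariance
    (n : ℕ) [NeZero n] (hn : 2 ≤ n)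
    (C : Matrix (Fin n) (Fin n) ℝ)
    (hC0 : ∀ i j, 0 ≤ C i j) (hCrow : ∀ i, ∑ j, C i j = 1) (hCdiag : ∀ i, C i i = 0)
    (a : Fin n → ℝ) (ha0 : ∀ i, 0 ≤ a i) (ha1 : ∀ i, a i < 1) (hane : a ≠ 0)
    (hstar1 : ∀ j : Fin n, j ≠ 0 → C j 0 = 1)
    (hstar2 : ∀ j : Fin n, j ≠ 0 → ∀ i : Fin n, i ≠ 0 → C j i = 0)
    (hcenter : a 0 = 0)
    (α : ℝ)
    (hα : α = (1 / 4) * (∑ j ∈ Finset.univ.filter (fun j => 0 < a j), a j / (1 - a j))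
            - ((n : ℝ) - 1) / n) :
    ∀ p ∈ box n 0 (fun i => 1 + if i = 0 then α else 0),
      percMap n C a p ∈ box n 0 (fun i => 1 + if i = 0 then α else 0) := by
  intro p hp
  have hn0 : (0 : ℝ) < n := by exact_mod_cast (by omega : 0 < n)
  have hn1 : 1 / (n : ℝ) ≤ 1 := by
    rw [div_le_one hn0]
    exact_mod_cast (by omega : 1 ≤ n)
  have hinv : 0 < 1 / (n : ℝ) := by positivity
  have hp0 : ∀ i, 0 ≤ p i := fun i => (hp i).1
  have hp1 : ∀ i, i ≠ 0 → p i ≤ 1 := fun i hi => by simpa [hi] using (hp i).2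
  intro i
  by_cases hi : i = 0
  · subst hi
    -- The center is not in `V_p`, so every `p j` in the sum is bounded by `1`.
    have hV : ∀ j ∈ Finset.univ.filter (fun j => 0 < a j), 0 ≤ a j / (1 - a j) ∧ p j ≤ 1 := by
      intro j hj
      have hj' : 0 < a j := (Finset.mem_filter.1 hj).2
      refine ⟨div_nonneg (ha0 j) (sub_pos.2 (ha1 j)).le, hp1 j ?_⟩
      rintro rfl
      exact hj'.ne' hcenter
    rw [percMap_center C ha0 ha1 hcenter hstar1]
    constructor
    · exact add_nonneg (Finset.sum_nonneg fun j hj => mul_nonneg (hV j hj).1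
        (mul_nonneg (sub_nonneg.2 (hV j hj).2) (hp0 j))) hinv.le
    · have hle : ∑ j ∈ Finset.univ.filter (fun j => 0 < a j), a j / (1 - a j) * ((1 - p j) * p j)
          ≤ (1 / 4) * ∑ j ∈ Finset.univ.filter (fun j => 0 < a j), a j / (1 - a j) := by
        rw [Finset.mul_sum]
        refine Finset.sum_le_sum fun j hj => ?_
        rw [mul_comm (1 / 4 : ℝ)]
        refine mul_le_mul_of_nonneg_left ?_ (hV j hj).1
        nlinarith [sq_nonneg (2 * p j - 1)]
      have hfrac : ((n : ℝ) - 1) / n = 1 - 1 / n := by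
        rw [sub_div, div_self hn0.ne']
      simp only [if_true]
      rw [hα, hfrac]
      linarith
  · rw [percMap_leaf C ha1 hcenter hstar2 p hi]
    have hai := sub_pos.2 (ha1 i)
    have hsq : p i ^ 2 ≤ 1 := pow_le_one₀ (hp0 i) (hp1 i hi)
    constructor
    · exact add_nonneg (mul_nonneg (ha0 i) (sq_nonneg _)) (div_nonneg hai.le hn0.le)
    · simp only [if_neg hi, add_zero]
      rw [div_eq_mul_one_div (1 - a i)]
      have h1 := mul_le_mul_of_nonneg_left hsq (ha0 i)
      have h2 := mul_le_mul_of_nonneg_left hn1 hai.le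
      linarith
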